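/- Let m ≥ 1 and consider, for t ∈ ℂ with |t| → 0, the m solutions of R_m(z) = −e^t, i.e. the zeros of P_m(z) + e^t P_m(−z). The zeros of M_m(π,z) = P_m(z) + P_m(−z) form conjugate pairs ±i ρ_ℓ with ρ_ℓ ∈ ℝ, and near each pair the solutions satisfy ẑ_{2ℓ}(t,π) = i ρ_ℓ + γ_ℓ t + O(t²) and ẑ_{2ℓ+1}(t,π) = −i ρ_ℓ + γ_ℓ t + O(t²) with the SAME real constant γ_ℓ > 1 for both members of the pair. If m is even, these account for all m solutions; if m is odd, the remaining solution satisfies ẑ_m(t,π) = E_m/t + O(1) with a constant E_m > 0. -/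

import Mathlib

/-! STATEMENT 11: description of the `m` solutions of `R_m(z) = −e^t` as `|t| → 0`:
zeros of `M_m(π,·) = P_m(z) + P_m(−z)` form conjugate pairs `±i ρ_ℓ`, near which the
solutions expand as `±i ρ_ℓ + γ_ℓ t + O(t²)` with the SAME real `γ_ℓ > 1`; for odd `m`
the remaining solution is `E_m/t + O(1)` with `E_m > 0`. -/

open Finset Complex Topology Asymptotics Polynomial
open scoped Real

/-- `p_j = (2m−j)!/(j!(m−j)!)`, the coefficients of the Padé numerator `P_m`. -/
noncomputable def pcoef (m j : ℕ) : ℂ :=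
  ((2 * m - j).factorial : ℂ) / ((j.factorial : ℂ) * ((m - j).factorial : ℂ))

/-- The numerator `P_m` of the `(m,m)`-Padé approximant of the exponential. -/
noncomputable def Pgauss (m : ℕ) (z : ℂ) : ℂ :=
  ∑ j ∈ Finset.range (m + 1), pcoef m j * z ^ j

/-- The stability function `R_m = P_m(z)/P_m(−z)` of the m-stage Gauss method. -/
noncomputable def Rgauss (m : ℕ) (z : ℂ) : ℂ := Pgauss m z / Pgauss m (-z)

/-- `M_m(θ,z) = P_m(z) − e^{iθ}P_m(−z)` as a polynomial in `z`. -/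
noncomputable def MgaussPoly (m : ℕ) (θ : ℝ) : Polynomial ℂ :=
  ∑ j ∈ Finset.range (m + 1),
    Polynomial.C (pcoef m j * (1 + (-1) ^ (j + 1) * Complex.exp ((θ : ℂ) * Complex.I)))
      * Polynomial.X ^ j

/-- `P_m(z) − w·P_m(−z)` as a polynomial in `z`; its roots are the solutions of
`R_m(z) = w`. -/
noncomputable def QPade (m : ℕ) (w : ℂ) : Polynomial ℂ :=
  ∑ j ∈ Finset.range (m + 1),
    Polynomial.C (pcoef m j * (1 - (-1) ^ j * w)) * Polynomial.X ^ j


/-- recursive form -/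
noncomputable def pB : ℕ → Polynomial ℂ
  | 0 => 1
  | 1 => Polynomial.X + Polynomial.C 2
  | (m + 2) => Polynomial.C (2 * (2 * (m : ℂ) + 3)) * pB (m + 1) + pB m * Polynomial.X ^ 2

lemma pcoef_rec0 (m : ℕ) : pcoef (m + 2) 0 = 2 * (2 * (m : ℂ) + 3) * pcoef (m + 1) 0 := by
  unfold pcoef
  have h1 : 2 * (m + 2) - 0 = (2 * m + 2) + 1 + 1 := by omega
  have h2 : 2 * (m + 1) - 0 = 2 * m + 2 := by omega
  have h3 : m + 2 - 0 = (m + 1) + 1 := by omega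
  have h4 : m + 1 - 0 = m + 1 := by omega
  rw [h1, h2, h3, h4, Nat.factorial_succ (2 * m + 2 + 1), Nat.factorial_succ (2 * m + 2),
    Nat.factorial_succ (m + 1)]
  have : ((m + 1).factorial : ℂ) ≠ 0 := by exact_mod_cast Nat.factorial_ne_zero _
  have h5 : (m : ℂ) + 1 + 1 ≠ 0 := by exact_mod_cast Nat.succ_ne_zero (m + 1)
  push_cast
  field_simp
  ring

lemma pcoef_rec1 (m : ℕ) : pcoef (m + 2) 1 = 2 * (2 * (m : ℂ) + 3) * pcoef (m + 1) 1 := by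
  unfold pcoef
  have h1 : 2 * (m + 2) - 1 = (2 * m + 1) + 1 + 1 := by omega
  have h2 : 2 * (m + 1) - 1 = 2 * m + 1 := by omega
  have h3 : m + 2 - 1 = m + 1 := by omega
  have h4 : m + 1 - 1 = m := by omega
  rw [h1, h2, h3, h4, Nat.factorial_succ (2 * m + 1 + 1), Nat.factorial_succ (2 * m + 1),
    Nat.factorial_succ m]
  have : ((m).factorial : ℂ) ≠ 0 := by exact_mod_cast Nat.factorial_ne_zero _
  have h5 : (m : ℂ) + 1 ≠ 0 := by exact_mod_cast Nat.succ_ne_zero (m)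
  push_cast
  field_simp
  ring

lemma pcoef_rec2 (k d : ℕ) : pcoef (k + 1 + d + 2) (k + 2) =
    2 * (2 * ((k + 1 + d : ℕ) : ℂ) + 3) * pcoef (k + 1 + d + 1) (k + 2) + pcoef (k + 1 + d) k := by
  unfold pcoef
  have h1 : 2 * (k + 1 + d + 2) - (k + 2) = (k + 2 * d + 2) + 1 + 1 := by omega
  have h2 : 2 * (k + 1 + d + 1) - (k + 2) = k + 2 * d + 2 := by omega
  have h3 : k + 1 + d + 2 - (k + 2) = d + 1 := by omega
  have h4 : k + 1 + d + 1 - (k + 2) = d := by omega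
  have h6 : 2 * (k + 1 + d) - k = k + 2 * d + 2 := by omega
  have h7 : k + 1 + d - k = d + 1 := by omega
  rw [h1, h2, h3, h4, h6, h7, Nat.factorial_succ (k + 2 * d + 2 + 1),
    Nat.factorial_succ (k + 2 * d + 2), Nat.factorial_succ d, Nat.factorial_succ (k + 1),
    Nat.factorial_succ k]
  have : ((d).factorial : ℂ) ≠ 0 := by exact_mod_cast Nat.factorial_ne_zero _
  have : ((k).factorial : ℂ) ≠ 0 := by exact_mod_cast Nat.factorial_ne_zero _
  have h5 : (d : ℂ) + 1 ≠ 0 := by exact_mod_cast Nat.succ_ne_zero (d)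
  have h5 : (k : ℂ) + 1 ≠ 0 := by exact_mod_cast Nat.succ_ne_zero (k)
  have h5 : (k : ℂ) + 1 + 1 ≠ 0 := by exact_mod_cast Nat.succ_ne_zero (k + 1)
  push_cast
  field_simp
  ring

lemma pcoef_self (m : ℕ) : pcoef m m = 1 := by
  unfold pcoef
  have h1 : 2 * m - m = m := by omega
  have : ((m).factorial : ℂ) ≠ 0 := by exact_mod_cast Nat.factorial_ne_zero _
  rw [h1]; simp [this]

lemma pcoef_pred (m : ℕ) : pcoef (m + 1) m = ((m : ℂ) + 2) * (m + 1) := by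
  unfold pcoef
  have h1 : 2 * (m + 1) - m = m + 1 + 1 := by omega
  have : ((m).factorial : ℂ) ≠ 0 := by exact_mod_cast Nat.factorial_ne_zero _
  rw [h1, Nat.factorial_succ (m + 1), Nat.factorial_succ m]
  have h7 : m + 1 - m = 1 := by omega
  rw [h7]
  push_cast
  field_simp
  simp
  ring

lemma coeff_pB : ∀ (m j : ℕ), (pB m).coeff j = if j ≤ m then pcoef m j else 0
  | 0, j => by
    rw [pB, Polynomial.coeff_one]
    rcases j with _ | j
    · simp [pcoef]
    · simp
  | 1, j => by
    rw [pB]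
    rcases j with _ | _ | j
    · simp [pcoef]
    · simp [pcoef]
    · simp [Polynomial.coeff_X]
  | (m + 2), j => by
    rw [pB, Polynomial.coeff_add, Polynomial.coeff_C_mul, coeff_pB (m + 1) j]
    rcases j with _ | _ | k
    · rw [Polynomial.coeff_mul_X_pow']
      simp [pcoef_rec0]
    · rw [Polynomial.coeff_mul_X_pow']
      simp [pcoef_rec1]
    · rw [Polynomial.coeff_mul_X_pow, coeff_pB m k]
      rcases lt_trichotomy k m with h | h | h
      · obtain ⟨d, rfl⟩ := Nat.exists_eq_add_of_lt h
        have e : k + d + 1 = k + 1 + d := by omega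
        rw [e]
        rw [if_pos (by omega), if_pos (by omega), if_pos (by omega), pcoef_rec2]
      · subst h
        rw [if_neg (by omega), if_pos (by omega), if_pos (by omega), pcoef_self, pcoef_self]
        simp
      · rw [if_neg (by omega), if_neg (by omega), if_neg (by omega)]
        simp

lemma pB_natDegree_lt (m : ℕ) : (pB m).natDegree < m + 1 := by
  have : (pB m).natDegree ≤ m := by
    rw [Polynomial.natDegree_le_iff_coeff_eq_zero]
    intro N hN
    rw [coeff_pB, if_neg (by omega)]
  omega

lemma Pgauss_eq (m : ℕ) (z : ℂ) : Pgauss m z = (pB m).eval z := by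
  rw [Polynomial.eval_eq_sum_range' (pB_natDegree_lt m), Pgauss]
  refine Finset.sum_congr rfl fun j hj => ?_
  rw [coeff_pB, if_pos (by simpa [Nat.lt_succ_iff] using hj)]

lemma pB_monic (m : ℕ) : (pB m).Monic := by
  refine Polynomial.monic_of_natDegree_le_of_coeff_eq_one m ?_ ?_
  · have := pB_natDegree_lt m; omega
  · rw [coeff_pB, if_pos le_rfl, pcoef_self]

lemma QPade_eval (m : ℕ) (w z : ℂ) :
    (QPade m w).eval z = (pB m).eval z - w * (pB m).eval (-z) := by
  rw [← Pgauss_eq, ← Pgauss_eq, QPade, Pgauss, Pgauss, Polynomial.eval_finsetSum,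
    Finset.mul_sum, ← Finset.sum_sub_distrib]
  refine Finset.sum_congr rfl fun j hj => ?_
  rw [neg_pow z]
  simp
  ring

lemma QPade_coeff (m j : ℕ) (w : ℂ) :
    (QPade m w).coeff j = if j ≤ m then pcoef m j * (1 - (-1) ^ j * w) else 0 := by
  rw [QPade, Polynomial.finsetSum_coeff]
  simp only [Polynomial.coeff_C_mul, Polynomial.coeff_X_pow, mul_ite, mul_one, mul_zero]
  rw [Finset.sum_ite_eq]
  simp

lemma MgaussPoly_pi (m : ℕ) : MgaussPoly m π = QPade m (-1) := by
  unfold MgaussPoly QPade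
  refine Finset.sum_congr rfl fun j hj => ?_
  rw [Complex.exp_pi_mul_I]
  congr 3
  ring

/-- the even combination -/
lemma pB_rec (m : ℕ) (z : ℂ) : (pB (m + 2)).eval z
    = 2 * (2 * (m : ℂ) + 3) * (pB (m + 1)).eval z + z ^ 2 * (pB m).eval z := by
  rw [pB]; simp; ring

lemma pB_det (m : ℕ) (z : ℂ) : (pB (m + 1)).eval z * (pB m).eval (-z)
    - (pB (m + 1)).eval (-z) * (pB m).eval z = 2 * z * (- z ^ 2) ^ m := by
  induction m with
  | zero => simp [pB]; ring
  | succ m ih =>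
    rw [pB_rec, pB_rec, pow_succ]
    linear_combination (- z ^ 2) * ih

lemma pB_deriv : ∀ (m : ℕ) (z : ℂ), 2 * (pB (m + 1)).derivative.eval z
    = (pB (m + 1)).eval z - z * (pB m).eval z
  | 0, z => by simp [pB]
  | 1, z => by simp [pB]; ring
  | (m + 2), z => by
    have h1 := pB_deriv m z
    have h2 := pB_deriv (m + 1) z
    rw [pB_rec (m + 1), pB]
    have e := pB_rec m z
    simp at *
    linear_combination (2 * (2 * (m + 1 : ℂ) + 3)) * h2 + z ^ 2 * h1 + z * e

/-- the Wronskian-type quantity -/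
lemma pB_W (m : ℕ) (z : ℂ) : (pB (m + 1)).derivative.eval z * (pB (m + 1)).eval (-z)
    + (pB (m + 1)).derivative.eval (-z) * (pB (m + 1)).eval z
    = (pB (m + 1)).eval z * (pB (m + 1)).eval (-z) - (- z ^ 2) ^ (m + 1) := by
  have h1 := pB_deriv m z
  have h2 := pB_deriv m (-z)
  have h3 := pB_det m z
  rw [pow_succ]
  linear_combination (1 / 2) * (pB (m + 1)).eval (-z) * h1 + (1 / 2) * (pB (m + 1)).eval z * h2
    + z / 2 * h3

lemma re_inv_pos {q : ℂ} (h : 0 < q.re) : 0 < (q⁻¹).re := by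
  rw [Complex.inv_re]
  refine div_pos h (Complex.normSq_pos.2 ?_)
  rintro rfl
  simp at h

/-- continued fraction argument -/
lemma cf_ne_zero (f : ℕ → ℂ) (z : ℂ) (hz : 0 < z.re) (h0 : f 0 ≠ 0)
    (h1 : 0 < (f 1 / (z * f 0)).re)
    (hr : ∀ m, f (m + 2) = 2 * (2 * (m : ℂ) + 3) * f (m + 1) + z ^ 2 * f m) :
    ∀ m, f m ≠ 0 ∧ 0 < (f (m + 1) / (z * f m)).re := by
  have hz0 : z ≠ 0 := by rintro rfl; simp at hz
  intro m
  induction m with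
  | zero => exact ⟨h0, h1⟩
  | succ m ih =>
    obtain ⟨a, b⟩ := ih
    have c : f (m + 1) ≠ 0 := by
      intro h
      rw [h] at b
      simp at b
    refine ⟨c, ?_⟩
    have e : f (m + 1 + 1) / (z * f (m + 1))
        = ((2 * (2 * (m : ℝ) + 3) : ℝ) : ℂ) * z⁻¹ + (f (m + 1) / (z * f m))⁻¹ := by
      rw [hr]
      push_cast
      field_simp
    rw [e, Complex.add_re, Complex.re_ofReal_mul]
    have := re_inv_pos hz
    have := re_inv_pos b
    positivity

lemma pB_ne_zero_right (m : ℕ) (z : ℂ) (hz : 0 < z.re) : (pB m).eval z ≠ 0 := by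
  have hz0 : z ≠ 0 := by rintro rfl; simp at hz
  refine (cf_ne_zero (fun m => (pB m).eval z) z hz (by simp [pB]) ?_ (fun m => pB_rec m z) m).1
  have e : (pB 1).eval z / (z * (pB 0).eval z) = 1 + ((2 : ℝ) : ℂ) * z⁻¹ := by
    simp [pB]
    field_simp
  simp only [e]
  rw [Complex.add_re, Complex.re_ofReal_mul]
  have := re_inv_pos hz
  simp only [Complex.one_re]
  positivity

lemma even_ne_zero_right (m : ℕ) (z : ℂ) (hz : 0 < z.re) :
    (pB m).eval z + (pB m).eval (-z) ≠ 0 := by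
  have hz0 : z ≠ 0 := by rintro rfl; simp at hz
  refine (cf_ne_zero (fun m => (pB m).eval z + (pB m).eval (-z)) z hz ?_ ?_ (fun m => ?_) m).1
  · simp [pB]
  · have e : ((pB 1).eval z + (pB 1).eval (-z)) / (z * ((pB 0).eval z + (pB 0).eval (-z)))
      = ((2 : ℝ) : ℂ) * z⁻¹ := by
      simp [pB]
      field_simp
      ring
    simp only [e]
    rw [Complex.re_ofReal_mul]
    have := re_inv_pos hz
    positivity
  · rw [pB_rec, pB_rec]; ring

lemma even_root_re (m : ℕ) (z : ℂ) (h : (pB m).eval z + (pB m).eval (-z) = 0) : z.re = 0 := by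
  rcases lt_trichotomy z.re 0 with h1 | h1 | h1
  · exact absurd (by rw [neg_neg, add_comm]; exact h) (even_ne_zero_right m (-z) (by simpa using h1))
  · exact h1
  · exact absurd h (even_ne_zero_right m z h1)

lemma pB_zero : ∀ (m : ℕ), (pB m).eval 0 ≠ 0
  | 0 => by simp [pB]
  | 1 => by simp [pB]
  | (m + 2) => by
    rw [pB_rec]
    have := pB_zero (m + 1)
    have h : 2 * (2 * (m : ℂ) + 3) ≠ 0 := by exact_mod_cast (by omega : 2 * (2 * m + 3) ≠ 0)
    simpa using ⟨by simpa using h, this⟩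

lemma pB_conj : ∀ (m : ℕ) (z : ℂ), (pB m).eval ((starRingEnd ℂ) z) = (starRingEnd ℂ) ((pB m).eval z)
  | 0, z => by simp [pB]
  | 1, z => by
    have h2 : (starRingEnd ℂ) 2 = 2 := map_ofNat _ 2
    simp [pB, h2]
  | (m + 2), z => by
    have h2 : (starRingEnd ℂ) 2 = 2 := map_ofNat _ 2
    have h3 : (starRingEnd ℂ) 3 = 3 := map_ofNat _ 3
    rw [pB_rec, pB_rec, pB_conj, pB_conj]
    simp [h2, h3]

lemma pB_conj_I (m : ℕ) (y : ℝ) : (pB m).eval (-((y : ℂ) * I)) = (starRingEnd ℂ) ((pB m).eval (y * I)) := by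
  rw [← pB_conj]; simp

lemma pB_ne_zero_I (m : ℕ) (y : ℝ) : (pB m).eval (y * I) ≠ 0 := by
  intro h
  have h2 := pB_conj_I m y
  rw [h, map_zero] at h2
  rcases eq_or_ne y 0 with rfl | hy
  · exact pB_zero m (by simpa using h)
  cases m with
  | zero => simp [pB] at h
  | succ m =>
    have := pB_det m (y * I)
    rw [h, h2] at this
    simp [hy] at this

lemma pB_root_re (m : ℕ) (z : ℂ) (h : (pB m).eval z = 0) : z.re < 0 := by
  rcases lt_trichotomy z.re 0 with h1 | h1 | h1
  · exact h1
  · exfalso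
    refine pB_ne_zero_I m z.im ?_
    have : ((z.im : ℝ) : ℂ) * I = z := by
      apply Complex.ext <;> simp [h1]
    rw [this, h]
  · exact absurd h (pB_ne_zero_right m z h1)

lemma pB_logderiv_re (m : ℕ) (y : ℝ) :
    0 < ((pB (m + 1)).derivative.eval (y * I) / (pB (m + 1)).eval (y * I)).re := by
  rw [(IsAlgClosed.splits (pB (m + 1))).eval_derivative_div_eval_of_ne_zero (pB_ne_zero_I _ _)]
  have hc : (pB (m + 1)).roots.card = m + 1 := by
    rw [IsAlgClosed.card_roots_eq_natDegree]
    refine Polynomial.natDegree_eq_of_le_of_coeff_ne_zero (by have := pB_natDegree_lt (m+1); omega) ?_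
    rw [coeff_pB, if_pos le_rfl, pcoef_self]; simp
  have e := map_multiset_sum Complex.reAddGroupHom
    (Multiset.map (fun z => 1 / ((y : ℂ) * I - z)) (pB (m + 1)).roots)
  simp only [Complex.coe_reAddGroupHom] at e
  rw [e, Multiset.map_map]
  have : (0 : ℝ) = (Multiset.map (fun _ : ℂ => (0 : ℝ)) (pB (m + 1)).roots).sum := by simp
  rw [this]
  refine Multiset.sum_lt_sum_of_nonempty ?_ ?_
  · intro h; rw [h] at hc; simp at hc
  · intro i hi
    have hi' := pB_root_re (m + 1) i ((Polynomial.mem_roots (pB_monic _).ne_zero).1 hi)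
    simp only [Function.comp, one_div]
    apply re_inv_pos
    simpa using hi'

lemma normSq_gt (m : ℕ) (y : ℝ) :
    y ^ (2 * (m + 1)) < Complex.normSq ((pB (m + 1)).eval (y * I)) := by
  have hW := pB_W m (y * I)
  have hne := pB_ne_zero_I (m + 1) y
  have hpos := pB_logderiv_re m y
  have hN : 0 < Complex.normSq ((pB (m + 1)).eval (y * I)) := Complex.normSq_pos.2 hne
  have hd : (pB (m + 1)).derivative.eval (-((y : ℂ) * I))
      = (starRingEnd ℂ) ((pB (m + 1)).derivative.eval (y * I)) := by
    have h1 := pB_deriv m (y * I)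
    have h2 := pB_deriv m (-(y * I))
    rw [pB_conj_I, pB_conj_I] at h2
    have h3 := congrArg (starRingEnd ℂ) h1
    have hc2 : (starRingEnd ℂ) 2 = 2 := map_ofNat _ 2
    simp [hc2] at h3
    have : (2 : ℂ) ≠ 0 := two_ne_zero
    apply mul_left_cancel₀ this
    rw [h2, h3]; ring
  rw [hd, pB_conj_I] at hW
  have e1 : (- ((y : ℂ) * I) ^ 2) ^ (m + 1) = ((y ^ (2 * (m + 1)) : ℝ) : ℂ) := by
    rw [mul_pow, I_sq, pow_mul]; push_cast; ring
  rw [e1, Complex.mul_conj] at hW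
  have hW2 := congrArg Complex.re hW
  rw [Complex.div_re, ← add_div] at hpos
  have := (div_pos_iff_of_pos_right hN).1 hpos
  simp only [Complex.add_re, Complex.mul_re, Complex.conj_re, Complex.conj_im, Complex.sub_re,
    Complex.ofReal_re] at hW2
  nlinarith

lemma analytic_taylor_one {f : ℂ → ℂ} {c : ℂ} (hf : AnalyticAt ℂ f 0) (hd : HasDerivAt f c 0) :
    (fun t : ℂ => f t - (f 0 + c * t)) =O[𝓝 (0 : ℂ)] fun t : ℂ => t ^ 2 := by
  obtain ⟨p, hp⟩ := hf
  have h := hp.isBigO_sub_partialSum_pow 2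
  have hc : p.coeff 1 = c := by
    have := hp.hasDerivAt.unique hd
    exact this
  have h0 : p.coeff 0 = f 0 := by
    have := hp.coeff_zero (fun _ => 1)
    exact this
  simp only [zero_add] at h
  have h2 : (fun y : ℂ => ‖y‖ ^ 2) =O[𝓝 (0 : ℂ)] fun t : ℂ => t ^ 2 := by
    refine IsBigO.of_norm_right ?_
    simp only [norm_pow]
    exact isBigO_refl _ _
  refine (h.trans h2).congr_left fun y => ?_
  simp only [FormalMultilinearSeries.partialSum, Finset.sum_range_succ, Finset.sum_range_zero,
    FormalMultilinearSeries.apply_eq_pow_smul_coeff, h0, hc]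
  simp
  ring

lemma branch_exists {f : ℂ → ℂ} {z0 c : ℂ} (hf : AnalyticAt ℂ f z0) (h0 : f z0 = -1)
    (hd : HasDerivAt f c z0) (hc : c ≠ 0) :
    ∃ zf : ℂ → ℂ, Filter.Tendsto zf (𝓝 0) (𝓝 z0) ∧
      (∀ᶠ t : ℂ in 𝓝 (0 : ℂ), f (zf t) = -Complex.exp t) ∧
      (fun t : ℂ => zf t - (z0 + (-c⁻¹) * t)) =O[𝓝 (0 : ℂ)] fun t : ℂ => t ^ 2 := by
  have hc' : deriv f z0 ≠ 0 := by rw [hd.deriv]; exact hc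
  set r := hf.hasStrictDerivAt.localInverse _ _ _ hc' with hr
  have hra : AnalyticAt ℂ r (f z0) := hf.analyticAt_localInverse hc'
  have hr0 : r (f z0) = z0 := HasStrictFDerivAt.localInverse_apply_image ..
  have hri : ∀ᶠ y in 𝓝 (f z0), f (r y) = y :=
    HasStrictDerivAt.eventually_right_inverse ..
  have hrd : HasDerivAt r (deriv f z0)⁻¹ (f z0) :=
    (hf.hasStrictDerivAt.to_localInverse hc').hasDerivAt
  have he : AnalyticAt ℂ (fun t : ℂ => -Complex.exp t) 0 := by fun_prop
  have he0 : -Complex.exp 0 = f z0 := by simp [h0]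
  have hed : HasDerivAt (fun t : ℂ => -Complex.exp t) (-1) 0 := by
    have := (Complex.hasDerivAt_exp 0).neg
    rw [Complex.exp_zero] at this
    exact this
  have hz : AnalyticAt ℂ (fun t : ℂ => r (-Complex.exp t)) 0 :=
    AnalyticAt.fun_comp (by rw [he0]; exact hra) he
  have hzd : HasDerivAt (fun t : ℂ => r (-Complex.exp t)) (-c⁻¹) 0 := by
    have h := HasDerivAt.comp (0 : ℂ) (h₂ := r) (h := fun t : ℂ => -Complex.exp t)
      (by rw [he0]; exact hrd) hed
    rw [hd.deriv] at h
    simpa [Function.comp_def] using h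
  have hz0 : r (-Complex.exp 0) = z0 := by
    rw [he0, hr0]
  refine ⟨fun t => r (-Complex.exp t), ?_, ?_, ?_⟩
  · have := hz.continuousAt.tendsto
    simpa only [hz0] using this
  · have := he.continuousAt.tendsto
    rw [he0] at this
    exact this.eventually hri
  · have := analytic_taylor_one hz hzd
    simpa only [hz0] using this

/-- local branch near a zero on the imaginary axis -/
lemma pade_branch (n : ℕ) (y : ℝ)
    (h0 : (pB (n + 1)).eval (y * I) + (pB (n + 1)).eval (-(y * I)) = 0) (z0 : ℂ)
    (hz0 : z0 = y * I ∨ z0 = -(y * I)) :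
    ∃ zf : ℂ → ℂ, Filter.Tendsto zf (𝓝 0) (𝓝 z0) ∧
      (∀ᶠ t : ℂ in 𝓝 (0 : ℂ), Rgauss (n + 1) (zf t) = -Complex.exp t) ∧
      (fun t : ℂ => zf t - (z0 +
        ((Complex.normSq ((pB (n + 1)).eval (y * I)) /
          (Complex.normSq ((pB (n + 1)).eval (y * I)) - y ^ (2 * (n + 1))) : ℝ) : ℂ) * t))
        =O[𝓝 (0 : ℂ)] fun t : ℂ => t ^ 2 := by
  set N := Complex.normSq ((pB (n + 1)).eval (y * I)) with hN
  have hgt := normSq_gt n y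
  rw [← hN] at hgt
  have hNpos : 0 < N := Complex.normSq_pos.2 (pB_ne_zero_I _ _)
  have hsum : (pB (n + 1)).eval z0 + (pB (n + 1)).eval (-z0) = 0 := by
    rcases hz0 with rfl | rfl
    · exact h0
    · rw [neg_neg, add_comm]; exact h0
  have hprod : (pB (n + 1)).eval z0 * (pB (n + 1)).eval (-z0) = (N : ℂ) := by
    have : (pB (n + 1)).eval (y * I) * (pB (n + 1)).eval (-(y * I)) = (N : ℂ) := by
      rw [pB_conj_I, Complex.mul_conj]
    rcases hz0 with rfl | rfl
    · exact this
    · rw [neg_neg, mul_comm]; exact this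
  have hsq : (- z0 ^ 2) ^ (n + 1) = ((y ^ (2 * (n + 1)) : ℝ) : ℂ) := by
    have : z0 ^ 2 = (y * I) ^ 2 := by rcases hz0 with rfl | rfl <;> ring
    rw [this, mul_pow, I_sq, pow_mul]; push_cast; ring
  have hW := pB_W n z0
  rw [hprod, hsq] at hW
  have hN0 : (N : ℂ) ≠ 0 := by exact_mod_cast hNpos.ne'
  have hD0 : ((N - y ^ (2 * (n + 1)) : ℝ) : ℂ) ≠ 0 := by
    exact_mod_cast (sub_pos.2 hgt).ne'
  have hb0 : (pB (n + 1)).eval (-z0) ≠ 0 := by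
    intro h; rw [h, mul_zero] at hprod; exact hN0 hprod.symm
  have hfun : Rgauss (n + 1) = fun z => (pB (n + 1)).eval z / (pB (n + 1)).eval (-z) := by
    funext z; rw [Rgauss, Pgauss_eq, Pgauss_eq]
  have han1 : ∀ z, AnalyticAt ℂ (fun z : ℂ => (pB (n + 1)).eval z) z := fun z =>
    (AnalyticAt.aeval_polynomial analyticAt_id (pB (n + 1))).congr
      (Filter.Eventually.of_forall fun z => by simp [Polynomial.aeval_def, Polynomial.eval₂_eq_eval_map])
  have han2 : AnalyticAt ℂ (fun z : ℂ => (pB (n + 1)).eval (-z)) z0 :=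
    AnalyticAt.fun_comp (g := fun z : ℂ => (pB (n + 1)).eval z) (f := fun z => -z) (han1 _) (by fun_prop)
  have hd2 : HasDerivAt (fun z : ℂ => (pB (n + 1)).eval (-z))
      (-(pB (n + 1)).derivative.eval (-z0)) z0 := by
    have := ((pB (n + 1)).hasDerivAt (-z0)).comp z0 (hasDerivAt_neg z0)
    simpa [Function.comp_def] using this
  have hd := ((pB (n + 1)).hasDerivAt z0).div hd2 hb0
  have hval : Rgauss (n + 1) z0 = -1 := by
    rw [hfun]
    show (pB (n + 1)).eval z0 / (pB (n + 1)).eval (-z0) = -1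
    rw [div_eq_iff hb0]
    linear_combination hsum
  have hcval : ((pB (n + 1)).derivative.eval z0 * (pB (n + 1)).eval (-z0) -
      (pB (n + 1)).eval z0 * -(pB (n + 1)).derivative.eval (-z0)) / (pB (n + 1)).eval (-z0) ^ 2
      = -(((N - y ^ (2 * (n + 1)) : ℝ) : ℂ) / N) := by
    rw [div_eq_iff (pow_ne_zero 2 hb0)]
    have e : (pB (n + 1)).eval (-z0) ^ 2 = -(N : ℂ) := by
      linear_combination (pB (n + 1)).eval (-z0) * hsum - hprod
    rw [e]
    field_simp
    push_cast at hW ⊢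
    linear_combination hW
  rw [hcval] at hd
  have hne : -(((N - y ^ (2 * (n + 1)) : ℝ) : ℂ) / N) ≠ 0 := neg_ne_zero.2 (div_ne_zero hD0 hN0)
  have hanR : AnalyticAt ℂ (Rgauss (n + 1)) z0 := by
    rw [hfun]; exact (han1 z0).div han2 hb0
  obtain ⟨zf, h1, h2, h3⟩ := branch_exists hanR hval (by rw [hfun]; exact hd) hne
  refine ⟨zf, h1, h2, h3.congr_left fun t => ?_⟩
  congr 3
  rw [inv_neg, neg_neg, inv_div, Complex.ofReal_div]

lemma QPade_eq (m : ℕ) (w : ℂ) : QPade m w = pB m - C w * (pB m).comp (-X) := by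
  refine Polynomial.funext fun z => ?_
  rw [QPade_eval]; simp

lemma M_root_iff (m : ℕ) (z : ℂ) :
    (QPade m (-1)).eval z = 0 ↔ (pB m).eval z + (pB m).eval (-z) = 0 := by
  rw [QPade_eval]; simp

lemma M_natDegree (n : ℕ) : (QPade (n + 1) (-1)).natDegree = (n + 1) / 2 + (n + 1) / 2 := by
  refine Polynomial.natDegree_eq_of_le_of_coeff_ne_zero ?_ ?_
  · rw [Polynomial.natDegree_le_iff_coeff_eq_zero]
    intro N hN
    rw [QPade_coeff]
    split_ifs with h
    · have hN' : Odd N := by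
        rcases Nat.even_or_odd N with h' | h'
        · obtain ⟨k, hk⟩ := h'; omega
        · exact h'
      rw [hN'.neg_one_pow]; simp
    · rfl
  · have he : Even ((n + 1) / 2 + (n + 1) / 2) := ⟨_, rfl⟩
    rw [QPade_coeff, if_pos (by omega), he.neg_one_pow]
    refine mul_ne_zero ?_ (by norm_num)
    unfold pcoef
    refine div_ne_zero ?_ (mul_ne_zero ?_ ?_) <;> exact_mod_cast Nat.factorial_ne_zero _

lemma M_ne_zero (n : ℕ) : QPade (n + 1) (-1) ≠ 0 := by
  intro h
  have : (QPade (n + 1) (-1)).eval 0 = 0 := by rw [h]; simp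
  rw [M_root_iff] at this
  simp at this
  exact pB_zero _ this

lemma M_nodup (n : ℕ) : (QPade (n + 1) (-1)).roots.Nodup := by
  rw [Multiset.nodup_iff_count_le_one]
  intro z
  rw [Polynomial.count_roots]
  by_contra hlt
  rw [not_le, Polynomial.one_lt_rootMultiplicity_iff_isRoot (M_ne_zero n)] at hlt
  obtain ⟨h1, h2⟩ := hlt
  rw [Polynomial.IsRoot.def] at h1 h2
  rw [M_root_iff] at h1
  have hz : z = (z.im : ℂ) * I := by
    apply Complex.ext <;> simp [even_root_re _ _ h1]
  have hd : (pB (n + 1)).derivative.eval z - (pB (n + 1)).derivative.eval (-z) = 0 := by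
    rw [QPade_eq] at h2
    simp [Polynomial.derivative_comp] at h2
    linear_combination h2
  have hW := pB_W n z
  have hgt := normSq_gt n z.im
  have hprod : (pB (n + 1)).eval z * (pB (n + 1)).eval (-z)
      = (Complex.normSq ((pB (n + 1)).eval (z.im * I)) : ℂ) := by
    rw [← Complex.mul_conj, ← pB_conj_I, ← hz]
  have hsq : (- z ^ 2) ^ (n + 1) = ((z.im ^ (2 * (n + 1)) : ℝ) : ℂ) := by
    rw [hz, mul_pow, I_sq, pow_mul]; push_cast; simp
  rw [hprod, hsq] at hW
  have : ((Complex.normSq ((pB (n + 1)).eval (z.im * I)) - z.im ^ (2 * (n + 1)) : ℝ) : ℂ) = 0 := by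
    push_cast at hW ⊢
    linear_combination (-1 : ℂ) * hW + (pB (n + 1)).eval (-z) * hd
      + (pB (n + 1)).derivative.eval (-z) * h1
  have := Complex.ofReal_eq_zero.1 this
  linarith

lemma M_roots (n : ℕ) : ∃ ρ : Fin ((n + 1) / 2) → ℝ,
    (∀ ℓ, 0 < ρ ℓ) ∧ Function.Injective ρ ∧
    (∀ ℓ, (pB (n + 1)).eval (ρ ℓ * I) + (pB (n + 1)).eval (-(ρ ℓ * I)) = 0) ∧
    (QPade (n + 1) (-1)).roots
        = Multiset.map (fun ℓ => (ρ ℓ : ℂ) * Complex.I) Finset.univ.val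
            + Multiset.map (fun ℓ => -((ρ ℓ : ℂ) * Complex.I)) Finset.univ.val := by
  classical
  set Q := QPade (n + 1) (-1) with hQ
  have hmem : ∀ z, z ∈ Q.roots ↔ (pB (n + 1)).eval z + (pB (n + 1)).eval (-z) = 0 := by
    intro z
    rw [Polynomial.mem_roots (M_ne_zero n), Polynomial.IsRoot.def, M_root_iff]
  have hneg : ∀ z, z ∈ Q.roots ↔ -z ∈ Q.roots := by
    intro z; rw [hmem, hmem, neg_neg, add_comm]
  have him : ∀ z, z ∈ Q.roots → z = (z.im : ℂ) * I := by
    intro z hz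
    apply Complex.ext <;> simp [even_root_re _ _ ((hmem z).1 hz)]
  have him0 : ∀ z, z ∈ Q.roots → z.im ≠ 0 := by
    intro z hz h
    have h1 := him z hz
    rw [h] at h1
    rw [hmem, h1] at hz
    simp at hz
    exact pB_zero _ hz
  have hcard : Q.roots.toFinset.card = (n + 1) / 2 + (n + 1) / 2 := by
    rw [Multiset.toFinset_card_of_nodup (M_nodup n), IsAlgClosed.card_roots_eq_natDegree,
      M_natDegree]
  set S := Q.roots.toFinset.filter (fun z => 0 < z.im) with hS
  set S' := Q.roots.toFinset.filter (fun z => ¬ 0 < z.im) with hS'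
  have hc2 : S.card + S'.card = (n + 1) / 2 + (n + 1) / 2 := by
    rw [← hcard]; exact Finset.card_filter_add_card_filter_not _
  have hc3 : S'.card = S.card := by
    have : S' = S.image (fun z => -z) := by
      ext z
      simp only [hS, hS', Finset.mem_filter, Multiset.mem_toFinset, Finset.mem_image]
      constructor
      · rintro ⟨h1, h2⟩
        refine ⟨-z, ⟨(hneg z).1 h1, ?_⟩, neg_neg z⟩
        have := him0 z h1
        simp only [Complex.neg_im]
        rcases lt_trichotomy z.im 0 with h | h | h
        · linarith
        · exact absurd h this
        · exact absurd h h2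
      · rintro ⟨w, ⟨h1, h2⟩, rfl⟩
        refine ⟨(hneg w).1 h1, ?_⟩
        simp only [Complex.neg_im]
        linarith
    rw [this, Finset.card_image_of_injective _ neg_injective]
  have hcS : S.card = (n + 1) / 2 := by omega
  let e := S.equivFinOfCardEq hcS
  have heS : ∀ ℓ, ((e.symm ℓ : S) : ℂ) ∈ Q.roots ∧ 0 < ((e.symm ℓ : S) : ℂ).im := by
    intro ℓ
    have := (e.symm ℓ).2
    have h2 := (Finset.mem_filter.1 this)
    exact ⟨Multiset.mem_toFinset.1 h2.1, h2.2⟩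
  have hval : ∀ ℓ, (((e.symm ℓ : S) : ℂ).im : ℂ) * I = (e.symm ℓ : S) :=
    fun ℓ => (him _ (heS ℓ).1).symm
  have hinj : Function.Injective fun ℓ => ((e.symm ℓ : S) : ℂ).im := by
    intro a b hab
    simp only at hab
    have : ((e.symm a : S) : ℂ) = (e.symm b : S) := by rw [← hval a, ← hval b, hab]
    exact e.symm.injective (Subtype.ext this)
  refine ⟨fun ℓ => ((e.symm ℓ : S) : ℂ).im, fun ℓ => (heS ℓ).2, hinj, ?_, ?_⟩
  · intro ℓ
    rw [hval]
    exact (hmem _).1 (heS ℓ).1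
  · simp only [hval]
    have hci : Function.Injective fun ℓ => ((e.symm ℓ : S) : ℂ) :=
      fun a b h => e.symm.injective (Subtype.ext h)
    refine (Multiset.Nodup.ext (M_nodup n) ?_).2 ?_
    · rw [Multiset.nodup_add]
      refine ⟨Finset.univ.nodup.map hci, Finset.univ.nodup.map (neg_injective.comp hci), ?_⟩
      rw [Multiset.disjoint_left]
      intro a h1 h2
      rw [Multiset.mem_map] at h1 h2
      obtain ⟨i, _, rfl⟩ := h1
      obtain ⟨j, _, hj⟩ := h2
      have h1 := (heS i).2
      have h2 := (heS j).2
      rw [← hj] at h1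
      simp only [Complex.neg_im] at h1
      linarith
    · intro a
      rw [Multiset.mem_add, Multiset.mem_map, Multiset.mem_map]
      constructor
      · intro ha
        rcases lt_or_gt_of_ne (him0 a ha) with h | h
        · right
          have hin : -a ∈ S := by
            rw [hS, Finset.mem_filter, Multiset.mem_toFinset]
            exact ⟨(hneg a).1 ha, by simpa using h⟩
          exact ⟨e ⟨-a, hin⟩, Finset.mem_univ_val _, by simp⟩
        · left
          have hin : a ∈ S := by
            rw [hS, Finset.mem_filter, Multiset.mem_toFinset]
            exact ⟨ha, h⟩
          exact ⟨e ⟨a, hin⟩, Finset.mem_univ_val _, by simp⟩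
      · rintro (⟨i, _, rfl⟩ | ⟨i, _, rfl⟩)
        · exact (heS i).1
        · exact (hneg _).1 (heS i).1

lemma slope_exp : Filter.Tendsto (fun t : ℂ => t⁻¹ * (Complex.exp t - 1)) (𝓝[≠] 0) (𝓝 1) := by
  have h := (Complex.hasDerivAt_exp 0).tendsto_slope_zero
  simpa using h

lemma exp_sub_one_ne : ∀ᶠ t : ℂ in 𝓝[≠] (0 : ℂ), Complex.exp t - 1 ≠ 0 := by
  filter_upwards [slope_exp.eventually_ne one_ne_zero] with t ht h
  rw [h] at ht; simp at ht

lemma coth_bigO : (fun t : ℂ => (1 + Complex.exp t) / (Complex.exp t - 1) - 2 / t)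
    =O[𝓝[≠] (0 : ℂ)] fun _ : ℂ => (1 : ℂ) := by
  have hd : HasDerivAt (fun t : ℂ => t * (1 + Complex.exp t) - 2 * (Complex.exp t - 1)) 0 0 := by
    have h1 := (hasDerivAt_id (0 : ℂ)).mul ((Complex.hasDerivAt_exp 0).const_add 1)
    have h2 := ((Complex.hasDerivAt_exp 0).sub_const 1).const_mul 2
    have h3 := h1.sub h2
    have e : (1 * (1 + Complex.exp 0) + id (0 : ℂ) * Complex.exp 0 - 2 * Complex.exp 0) = 0 := by
      simp; norm_num
    rw [e] at h3
    exact h3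
  have h := analytic_taylor_one (by fun_prop) hd
  simp only [Complex.exp_zero, sub_self, mul_zero, zero_mul, add_zero, sub_zero] at h
  have h' := h.mono (nhdsWithin_le_nhds (s := {(0 : ℂ)}ᶜ))
  have hs : Filter.Tendsto (fun t : ℂ => (t⁻¹ * (Complex.exp t - 1))⁻¹) (𝓝[≠] 0) (𝓝 1⁻¹) :=
    slope_exp.inv₀ one_ne_zero
  have h2 := h'.mul (isBigO_refl (fun t : ℂ => (t * (Complex.exp t - 1))⁻¹) (𝓝[≠] (0 : ℂ)))
  refine (h2.congr' ?_ ?_).trans (hs.isBigO_one ℂ)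
  · filter_upwards [exp_sub_one_ne, self_mem_nhdsWithin] with t h1 h2
    have h2 : t ≠ 0 := h2
    field_simp
  · filter_upwards [exp_sub_one_ne, self_mem_nhdsWithin] with t h1 h2
    have h2 : t ≠ 0 := h2
    field_simp

lemma Q_natDegree (m : ℕ) (w : ℂ) (h : 1 - (-1) ^ m * w ≠ 0) : (QPade m w).natDegree = m := by
  refine Polynomial.natDegree_eq_of_le_of_coeff_ne_zero ?_ ?_
  · rw [Polynomial.natDegree_le_iff_coeff_eq_zero]
    intro N hN
    rw [QPade_coeff, if_neg (by omega)]
  · rw [QPade_coeff, if_pos le_rfl, pcoef_self, one_mul]; exact h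

lemma Q_root_of_R (m : ℕ) (w z : ℂ) (hw : w ≠ 0) (h : Rgauss m z = w) :
    (QPade m w).eval z = 0 := by
  rw [Rgauss, Pgauss_eq, Pgauss_eq] at h
  have hb : (pB m).eval (-z) ≠ 0 := by
    intro hb; rw [hb, div_zero] at h; exact hw h.symm
  rw [div_eq_iff hb] at h
  rw [QPade_eval, h]; ring

lemma tendsto_ne_aux {f g : ℂ → ℂ} {a b : ℂ} (hf : Filter.Tendsto f (𝓝 0) (𝓝 a))
    (hg : Filter.Tendsto g (𝓝 0) (𝓝 b)) (hab : a ≠ b) : ∀ᶠ t in 𝓝 (0 : ℂ), f t ≠ g t := by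
  filter_upwards [(hf.sub hg).eventually_ne (sub_ne_zero.2 hab)] with t ht
  exact sub_ne_zero.1 ht

theorem pade_solutions_theta_pi (m : ℕ) (hm : 1 ≤ m) :
    ∃ (ρ : Fin (m / 2) → ℝ) (zp zn : Fin (m / 2) → ℂ → ℂ) (γ : Fin (m / 2) → ℝ),
      (MgaussPoly m π).roots
        = Multiset.map (fun ℓ => (ρ ℓ : ℂ) * Complex.I) Finset.univ.val
            + Multiset.map (fun ℓ => -((ρ ℓ : ℂ) * Complex.I)) Finset.univ.val ∧
      (∀ ℓ, 1 < γ ℓ ∧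
        (∀ᶠ t : ℂ in 𝓝[≠] (0 : ℂ),
          Rgauss m (zp ℓ t) = -Complex.exp t ∧ Rgauss m (zn ℓ t) = -Complex.exp t) ∧
        ((fun t : ℂ => zp ℓ t - ((ρ ℓ : ℂ) * Complex.I + (γ ℓ : ℂ) * t))
          =O[𝓝 (0 : ℂ)] fun t : ℂ => t ^ 2) ∧
        ((fun t : ℂ => zn ℓ t - (-((ρ ℓ : ℂ) * Complex.I) + (γ ℓ : ℂ) * t))
          =O[𝓝 (0 : ℂ)] fun t : ℂ => t ^ 2)) ∧
      (Even m →
        ∀ᶠ t : ℂ in 𝓝[≠] (0 : ℂ),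
          (QPade m (-Complex.exp t)).roots
            = Multiset.map (fun ℓ => zp ℓ t) Finset.univ.val
                + Multiset.map (fun ℓ => zn ℓ t) Finset.univ.val) ∧
      (Odd m → ∃ (zlast : ℂ → ℂ) (Em : ℝ),
        0 < Em ∧
        (∀ᶠ t : ℂ in 𝓝[≠] (0 : ℂ),
          (QPade m (-Complex.exp t)).roots
            = zlast t ::ₘ (Multiset.map (fun ℓ => zp ℓ t) Finset.univ.val
                + Multiset.map (fun ℓ => zn ℓ t) Finset.univ.val)) ∧
        ((fun t : ℂ => zlast t - (Em : ℂ) / t)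
          =O[𝓝[≠] (0 : ℂ)] fun _ : ℂ => (1 : ℂ))) := by

  obtain ⟨n, rfl⟩ : ∃ n, m = n + 1 := ⟨m - 1, by omega⟩
  obtain ⟨ρ, hpos, hinj, hroot, hroots⟩ := M_roots n
  choose zp hp1 hp2 hp3 using fun ℓ => pade_branch n (ρ ℓ) (hroot ℓ) _ (Or.inl rfl)
  choose zn hn1 hn2 hn3 using fun ℓ => pade_branch n (ρ ℓ) (hroot ℓ) _ (Or.inr rfl)
  -- the list of known solutions is eventually contained in the roots
  have hle : ∀ᶠ t : ℂ in 𝓝[≠] (0 : ℂ), QPade (n + 1) (-Complex.exp t) ≠ 0 →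
      Multiset.map (fun ℓ => zp ℓ t) Finset.univ.val
        + Multiset.map (fun ℓ => zn ℓ t) Finset.univ.val
        ≤ (QPade (n + 1) (-Complex.exp t)).roots := by
    have ep : ∀ᶠ t : ℂ in 𝓝[≠] (0 : ℂ), ∀ ℓ, Rgauss (n + 1) (zp ℓ t) = -Complex.exp t :=
      (Filter.eventually_all.2 hp2).filter_mono nhdsWithin_le_nhds
    have en : ∀ᶠ t : ℂ in 𝓝[≠] (0 : ℂ), ∀ ℓ, Rgauss (n + 1) (zn ℓ t) = -Complex.exp t :=
      (Filter.eventually_all.2 hn2).filter_mono nhdsWithin_le_nhds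
    have epp : ∀ᶠ t : ℂ in 𝓝[≠] (0 : ℂ), ∀ i j, i ≠ j → zp i t ≠ zp j t := by
      refine Filter.Eventually.filter_mono nhdsWithin_le_nhds ?_
      simp only [Filter.eventually_all]
      intro i j hij
      refine tendsto_ne_aux (hp1 i) (hp1 j) ?_
      intro h
      have := mul_right_cancel₀ I_ne_zero h
      exact hij (hinj (Complex.ofReal_injective this))
    have enn : ∀ᶠ t : ℂ in 𝓝[≠] (0 : ℂ), ∀ i j, i ≠ j → zn i t ≠ zn j t := by
      refine Filter.Eventually.filter_mono nhdsWithin_le_nhds ?_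
      simp only [Filter.eventually_all]
      intro i j hij
      refine tendsto_ne_aux (hn1 i) (hn1 j) ?_
      intro h
      have := mul_right_cancel₀ I_ne_zero (neg_injective h)
      exact hij (hinj (Complex.ofReal_injective this))
    have epn : ∀ᶠ t : ℂ in 𝓝[≠] (0 : ℂ), ∀ i j, zp i t ≠ zn j t := by
      refine Filter.Eventually.filter_mono nhdsWithin_le_nhds ?_
      simp only [Filter.eventually_all]
      intro i j
      refine tendsto_ne_aux (hp1 i) (hn1 j) ?_
      intro h
      have h := congrArg Complex.im h
      simp at h
      have := hpos i
      have := hpos j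
      linarith
    filter_upwards [ep, en, epp, enn, epn] with t h1 h2 h3 h4 h5 hQ
    have hnd : (Multiset.map (fun ℓ => zp ℓ t) Finset.univ.val
        + Multiset.map (fun ℓ => zn ℓ t) Finset.univ.val).Nodup := by
      rw [Multiset.nodup_add]
      refine ⟨Finset.univ.nodup.map fun i j h => ?_, Finset.univ.nodup.map fun i j h => ?_, ?_⟩
      · by_contra hij; exact h3 i j hij h
      · by_contra hij; exact h4 i j hij h
      · rw [Multiset.disjoint_left]
        intro a ha hb
        rw [Multiset.mem_map] at ha hb
        obtain ⟨i, _, rfl⟩ := ha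
        obtain ⟨j, _, hj⟩ := hb
        exact h5 i j hj.symm
    rw [Multiset.le_iff_subset hnd]
    intro a ha
    rw [Polynomial.mem_roots hQ, Polynomial.IsRoot.def]
    rw [Multiset.mem_add, Multiset.mem_map, Multiset.mem_map] at ha
    have hw : -Complex.exp t ≠ 0 := neg_ne_zero.2 (Complex.exp_ne_zero t)
    rcases ha with ⟨i, _, rfl⟩ | ⟨i, _, rfl⟩
    · exact Q_root_of_R _ _ _ hw (h1 i)
    · exact Q_root_of_R _ _ _ hw (h2 i)
  have hne0 : ∀ t : ℂ, 1 - (-1) ^ (n + 1) * (-Complex.exp t) ≠ 0 →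
      QPade (n + 1) (-Complex.exp t) ≠ 0 := by
    intro t ht h0
    have := Q_natDegree _ _ ht
    rw [h0] at this
    simp at this
  refine ⟨ρ, zp, zn, _, ?_, fun ℓ => ⟨?_, ?_, hp3 ℓ, hn3 ℓ⟩, ?_, ?_⟩
  · rw [MgaussPoly_pi]; exact hroots
  · have hgt := normSq_gt n (ρ ℓ)
    have := pow_pos (hpos ℓ) (2 * (n + 1))
    rw [one_lt_div (sub_pos.2 hgt)]
    linarith
  · exact ((hp2 ℓ).and (hn2 ℓ)).filter_mono nhdsWithin_le_nhds
  · intro hev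
    have hnz : ∀ᶠ t : ℂ in 𝓝[≠] (0 : ℂ), 1 + Complex.exp t ≠ 0 := by
      refine Filter.Eventually.filter_mono nhdsWithin_le_nhds ?_
      have hc : ContinuousAt (fun t : ℂ => 1 + Complex.exp t) 0 := by fun_prop
      exact hc.eventually_ne (by simp)
    filter_upwards [hle, hnz] with t h1 h2
    have hl : 1 - (-1) ^ (n + 1) * (-Complex.exp t) ≠ 0 := by
      rw [hev.neg_one_pow]; simpa using h2
    symm
    refine Multiset.eq_of_le_of_card_le (h1 (hne0 t hl)) ?_
    rw [IsAlgClosed.card_roots_eq_natDegree, Q_natDegree _ _ hl]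
    obtain ⟨k, hk⟩ := hev
    simp
    omega
  · intro hodd
    have hevn : Even n := by
      rcases Nat.even_or_odd n with h | h
      · exact h
      · exact absurd hodd (Nat.not_odd_iff_even.2 h.add_one)
    refine ⟨fun t => pcoef (n + 1) n * ((1 + Complex.exp t) / (Complex.exp t - 1))
      - ((∑ ℓ, zp ℓ t) + ∑ ℓ, zn ℓ t), 2 * (((n : ℝ) + 2) * (n + 1)), by positivity, ?_, ?_⟩
    · filter_upwards [hle, exp_sub_one_ne] with t h1 h2
      have hl : 1 - (-1) ^ (n + 1) * (-Complex.exp t) ≠ 0 := by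
        rw [hodd.neg_one_pow]
        intro h
        apply h2
        linear_combination -h
      obtain ⟨U, hU⟩ := Multiset.le_iff_exists_add.1 (h1 (hne0 t hl))
      have hdeg := Q_natDegree _ _ hl
      have hcard := congrArg Multiset.card hU
      rw [IsAlgClosed.card_roots_eq_natDegree, hdeg] at hcard
      have hU1 : U.card = 1 := by
        obtain ⟨k, hk⟩ := hodd
        simp at hcard
        omega
      obtain ⟨x, rfl⟩ := Multiset.card_eq_one.1 hU1
      have hV := (IsAlgClosed.splits
        (QPade (n + 1) (-Complex.exp t))).nextCoeff_eq_neg_sum_roots_mul_leadingCoeff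
      rw [Polynomial.nextCoeff_of_natDegree_pos (by omega), Polynomial.leadingCoeff, hdeg,
        Nat.add_sub_cancel, QPade_coeff, QPade_coeff, if_pos (by omega), if_pos le_rfl,
        hevn.neg_one_pow, hodd.neg_one_pow, pcoef_self, hU] at hV
      simp only [Multiset.sum_add, Multiset.sum_singleton] at hV
      have hx : pcoef (n + 1) n * ((1 + Complex.exp t) / (Complex.exp t - 1))
          - ((∑ ℓ, zp ℓ t) + ∑ ℓ, zn ℓ t) = x := by
        have e1 : (Multiset.map (fun ℓ => zp ℓ t) Finset.univ.val).sum = ∑ ℓ, zp ℓ t := rfl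
        have e2 : (Multiset.map (fun ℓ => zn ℓ t) Finset.univ.val).sum = ∑ ℓ, zn ℓ t := rfl
        rw [e1, e2] at hV
        field_simp
        linear_combination hV
      rw [hU, hx, add_comm, Multiset.singleton_add]
    · have hb : (fun t : ℂ => (∑ ℓ, zp ℓ t) + ∑ ℓ, zn ℓ t) =O[𝓝[≠] (0 : ℂ)] fun _ : ℂ => (1 : ℂ) :=
        (((tendsto_finsetSum _ fun ℓ _ => hp1 ℓ).add
          (tendsto_finsetSum _ fun ℓ _ => hn1 ℓ)).mono_left nhdsWithin_le_nhds).isBigO_one ℂ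
      refine ((coth_bigO.const_mul_left (pcoef (n + 1) n)).sub hb).congr_left fun t => ?_
      rw [pcoef_pred]
      push_cast
      ring
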